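/- Let k ≥ 5. For any two distinct vertices x, y ∈ B ∪ {a_2} of H_k(P_3), there is a path on 2k−1 vertices in H_k(P_3) starting at x and ending at y. Moreover, in the graph H_k(P_3) + a_1a_3 obtained by adding the edge a_1a_3, for every b ∈ B there is a path on 2k vertices starting at b and ending at a_2. -/

import Mathlib

open SimpleGraph

/-- The number of edges of a simple graph. -/
noncomputable def edgeCount {V : Type*} (G : SimpleGraph V) : ℕ := G.edgeSet.ncard

/-- `H` occurs as a subgraph of `G` (there is an injective map preserving adjacency). -/
def ContainsCopy {V W : Type*} (G : SimpleGraph V) (H : SimpleGraph W) : Prop :=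
  ∃ f : W → V, Function.Injective f ∧ ∀ a b : W, H.Adj a b → G.Adj (f a) (f b)

/-- The Turán number `ex(n, H)`: the maximum number of edges of an `H`-free
simple graph on `n` vertices. -/
noncomputable def exNum (n : ℕ) {W : Type*} (H : SimpleGraph W) : ℕ :=
  sSup {m | ∃ G : SimpleGraph (Fin n), ¬ ContainsCopy G H ∧ edgeCount G = m}

/-- `h(n,k,a) = C(k-a,2) + a(n-k+a)`. -/
def hFun (n k a : ℕ) : ℕ := (k - a).choose 2 + a * (n - k + a)

/-- `c(n,m,ℓ) = C(m-1,2) + t·C(ℓ-1,2) + C(r,2)` where `n = (m-1) + t(ℓ-1) + r`,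
`0 ≤ r < ℓ-1`. -/
def cFun (n m l : ℕ) : ℕ :=
  (m - 1).choose 2 + ((n - (m - 1)) / (l - 1)) * ((l - 1).choose 2)
    + ((n - (m - 1)) % (l - 1)).choose 2

/-- A graph is 2-connected if it has at least 3 vertices and removing any
single vertex leaves a connected graph. -/
def TwoConnected {V : Type*} [Fintype V] (G : SimpleGraph V) : Prop :=
  3 ≤ Fintype.card V ∧ ∀ v : V, (G.induce ({v}ᶜ : Set V)).Connected

/-- The circumference of a graph: the length of a longest cycle
(`0` if there is no cycle). -/
noncomputable def circumference {V : Type*} (G : SimpleGraph V) : ℕ :=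
  sSup {m | ∃ (v : V) (c : G.Walk v v), c.IsCycle ∧ c.length = m}

/-- The number of neighbours (in `G`) of `x` lying on the walk `p`. -/
noncomputable def degOn {V : Type*} (G : SimpleGraph V) {a b : V} (p : G.Walk a b) (x : V) : ℕ :=
  {v | v ∈ p.support ∧ G.Adj x v}.ncard

/-- The graph obtained from `G` by adding the edge `uv`. -/
def addEdge {V : Type*} (G : SimpleGraph V) (u v : V) : SimpleGraph V :=
  G ⊔ SimpleGraph.fromEdgeSet {s(u, v)}

/-- The minimum degree of a graph (with classical decidability). -/
noncomputable def minDeg {V : Type*} [Fintype V] (G : SimpleGraph V) : ℕ :=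
  @SimpleGraph.minDegree _ G _ (Classical.decRel _)
open SimpleGraph

/-- Membership (as 0-indexed natural) in the set `C` of `H_k(s)`:
`C = {x_{s+1}, x_{s+3}, …, x_{2k-s+1}}` (1-indexed). -/
def inC_HkS (k s i : ℕ) : Prop := s ≤ i ∧ i ≤ 2 * k - s ∧ (i - s) % 2 = 0

/-- Membership in the set `D` of `H_k(s)`: `D = {x_{s+2}, …, x_{2k-s}}` (1-indexed). -/
def inD_HkS (k s i : ℕ) : Prop := s ≤ i ∧ i ≤ 2 * k - s ∧ (i - s) % 2 = 1

/-- The graph `H_k(s)`: the path `x_1 … x_{2k+1}` (here 0-indexed on `Fin (2k+1)`),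
plus all edges inside `A = {x_1,…,x_s}`, all edges inside `B = {x_{2k-s+2},…,x_{2k+1}}`,
and all edges between `A ∪ B` and `C = {x_{s+1}, x_{s+3}, …, x_{2k-s+1}}`. -/
def HkS (k s : ℕ) : SimpleGraph (Fin (2 * k + 1)) :=
  SimpleGraph.fromRel (fun x y =>
    ((y : ℕ) = (x : ℕ) + 1) ∨
    ((x : ℕ) < s ∧ (y : ℕ) < s) ∨
    (2 * k - s + 1 ≤ (x : ℕ) ∧ 2 * k - s + 1 ≤ (y : ℕ)) ∨
    (((x : ℕ) < s ∨ 2 * k - s + 1 ≤ (x : ℕ)) ∧ inC_HkS k s (y : ℕ)))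

/-- Membership in the part `C` (of size `k-1`) of `H_k(M_2)` (0-indexed):
`C = {x_3, x_5, …, x_{2k-1}}` (1-indexed). -/
def inC_HkM2 (k i : ℕ) : Prop := 2 ≤ i ∧ i ≤ 2 * k - 2 ∧ i % 2 = 0

/-- Membership in `D` of `H_k(M_2)` (0-indexed): `D = {x_4, x_6, …, x_{2k-2}}` (1-indexed). -/
def inD_HkM2 (k i : ℕ) : Prop := 3 ≤ i ∧ i ≤ 2 * k - 3 ∧ i % 2 = 1

/-- The graph `H_k(M_2)`: the complete bipartite graph with parts
`C = {x_3,x_5,…,x_{2k-1}}` (size `k-1`) and `A ∪ B ∪ D` (size `k+2`), where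
`A = {x_1,x_2}`, `B = {x_{2k},x_{2k+1}}`, `D = {x_4,…,x_{2k-2}}`, together with the
matching edges `x_1x_2` and `x_{2k}x_{2k+1}` (here 0-indexed on `Fin (2k+1)`). -/
def HkM2 (k : ℕ) : SimpleGraph (Fin (2 * k + 1)) :=
  SimpleGraph.fromRel (fun x y =>
    ((x : ℕ) = 0 ∧ (y : ℕ) = 1) ∨
    ((x : ℕ) = 2 * k - 1 ∧ (y : ℕ) = 2 * k) ∨
    (inC_HkM2 k (x : ℕ) ∧ ¬ inC_HkM2 k (y : ℕ)))

/-- Membership in the part `B = {b_1, …, b_{k-1}}` of `H_k(P_3)`; on `Fin (2k+1)` we take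
`a_1 = 0, a_2 = 1, a_3 = 2`, `B = {3, …, k+1}`, `C = {k+2, …, 2k}`. -/
def inB_HkP3 (k i : ℕ) : Prop := 3 ≤ i ∧ i ≤ k + 1

/-- Membership in the set `C = {c_1, …, c_{k-1}}` of `H_k(P_3)`. -/
def inC_HkP3 (k i : ℕ) : Prop := k + 2 ≤ i ∧ i ≤ 2 * k

/-- The graph `H_k(P_3)`: the complete bipartite graph `K_{k-1,k+2}` with parts
`B = {b_1,…,b_{k-1}}` and `A ∪ C` where `A = {a_1,a_2,a_3}`, `C = {c_1,…,c_{k-1}}`,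
plus the edges `a_1a_2` and `a_2a_3`. Here `a_1 = 0, a_2 = 1, a_3 = 2`,
`B = {3,…,k+1}`, `C = {k+2,…,2k}` on `Fin (2k+1)`. -/
def HkP3 (k : ℕ) : SimpleGraph (Fin (2 * k + 1)) :=
  SimpleGraph.fromRel (fun x y =>
    ((x : ℕ) = 0 ∧ (y : ℕ) = 1) ∨
    ((x : ℕ) = 1 ∧ (y : ℕ) = 2) ∨
    (inB_HkP3 k (x : ℕ) ∧ ¬ inB_HkP3 k (y : ℕ)))

/-- The graph `F_k(t)`: the path `x_1 … x_{2k+t}` (0-indexed on `Fin (2k+t)`), plus all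
edges inside `A = {x_1,…,x_k}`, all edges inside `B = {x_{k+t+1},…,x_{2k+t}}`, all edges
between `x_k` and `B`, and all edges between `x_{k+t+1}` and `A`. -/
def FkT (k t : ℕ) : SimpleGraph (Fin (2 * k + t)) :=
  SimpleGraph.fromRel (fun x y =>
    ((y : ℕ) = (x : ℕ) + 1) ∨
    ((x : ℕ) < k ∧ (y : ℕ) < k) ∨
    (k + t ≤ (x : ℕ) ∧ k + t ≤ (y : ℕ)) ∨
    ((x : ℕ) = k - 1 ∧ k + t ≤ (y : ℕ)) ∨
    ((x : ℕ) = k + t ∧ (y : ℕ) < k))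

/-- The graph `H(n,k,a)`: vertices `{0,…,k-2a-1} = A`, `{k-2a,…,k-a-1} = B`,
`{k-a,…,n-1} = C`; all edges inside `A ∪ B` and all edges between `B` and `C`. -/
def Hgraph (n k a : ℕ) : SimpleGraph (Fin n) :=
  SimpleGraph.fromRel (fun x y =>
    ((x : ℕ) < k - a ∧ (y : ℕ) < k - a) ∨
    (k - 2 * a ≤ (x : ℕ) ∧ (x : ℕ) < k - a ∧ k - a ≤ (y : ℕ)))

/-- The graph `Z(n,k,t)` (for `n = (k-t-2) + ℓ(t-1) + 2`): two universal mutually adjacent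
vertices `0, 1`, a clique `K_{k-t-2}` on `{2,…,k-t-1}`, and consecutive blocks of size
`t-1` on the remaining vertices, each forming a clique `K_{t-1}`. -/
def Zgraph (n k t : ℕ) : SimpleGraph (Fin n) :=
  SimpleGraph.fromRel (fun x y =>
    ((x : ℕ) < 2) ∨ ((y : ℕ) < 2) ∨
    (2 ≤ (x : ℕ) ∧ (x : ℕ) < k - t ∧ 2 ≤ (y : ℕ) ∧ (y : ℕ) < k - t) ∨
    (k - t ≤ (x : ℕ) ∧ k - t ≤ (y : ℕ) ∧
      ((x : ℕ) - (k - t)) / (t - 1) = ((y : ℕ) - (k - t)) / (t - 1)))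

/-!
All the paths arise the same way. Set aside a short path `q` that starts at `a₁` and stays in `A`
except possibly for a last vertex `y ∈ B`, and let `S` be the set of vertices of `B` not on `q`.
Since `B` is completely joined to `A ∪ C` and `|C| = |B|`, from any `x ∈ S` one can zigzag between
`S` and `C` through all of `S` and then step to `a₁`, which puts `2|S| - 1` vertices before those
of `q`. For `q = a₁a₂a₃y`, where `|S| = k - 2`, and for `q = a₁a₂`, where `|S| = k - 1`, this is a
total of `2k - 1`; once `a₁a₃` is an edge, `q = a₁a₃a₂` gives one more.
-/

theorem exists_isPath_zigzag {V : Type*} {G : SimpleGraph V} {S T : Finset V} {x a y : V}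
    (hST : G.IsCompleteBetween S T) (hcard : S.card ≤ T.card + 1) (hx : x ∈ S)
    (hSa : ∀ s ∈ S, G.Adj s a) {q : G.Walk a y} (hq : q.IsPath)
    (hqST : ∀ v ∈ q.support, v ∉ S ∧ v ∉ T) :
    ∃ p : G.Walk x y, p.IsPath ∧ p.length + 1 = 2 * S.card + q.length ∧
      ∀ v ∈ p.support, v ∈ S ∨ v ∈ T ∨ v ∈ q.support := by
  classical
  induction S using Finset.strongInduction generalizing T x with
  | H S ih =>
    have hxq : x ∉ q.support := fun h => (hqST x h).1 hx
    have hScard : (S.erase x).card + 1 = S.card := Finset.card_erase_add_one hx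
    rcases (S.erase x).eq_empty_or_nonempty with hS | ⟨z, hz⟩
    · refine ⟨.cons (hSa x hx) q, hq.cons hxq, ?_, ?_⟩
      · rw [hS, Finset.card_empty] at hScard
        rw [Walk.length_cons]
        omega
      · simp +contextual [hx]
    · have hzS : z ∈ S := Finset.mem_of_mem_erase hz
      have hScard_pos : 0 < (S.erase x).card := Finset.card_pos.2 ⟨z, hz⟩
      obtain ⟨t, ht⟩ : T.Nonempty := Finset.card_pos.1 (by omega)
      have hTcard : (T.erase t).card + 1 = T.card := Finset.card_erase_add_one ht
      obtain ⟨p, hp, hlen, hsupp⟩ := ih (S.erase x) (Finset.erase_ssubset hx) (T := T.erase t)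
        (fun s hs t' ht' => hST (Finset.mem_of_mem_erase hs) (Finset.mem_of_mem_erase ht'))
        (by omega) hz (fun s hs => hSa s (Finset.mem_of_mem_erase hs))
        (fun v hv => (hqST v hv).imp (mt Finset.mem_of_mem_erase) (mt Finset.mem_of_mem_erase))
      have hdisj : Disjoint S T := Finset.disjoint_coe.1 hST.disjoint
      have hxT : x ∉ T := Finset.disjoint_left.1 hdisj hx
      have htS : t ∉ S := Finset.disjoint_right.1 hdisj ht
      have htq : t ∉ q.support := fun h => (hqST t h).2 ht
      have htp : t ∉ p.support := fun h => by simpa [htS, htq] using hsupp t h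
      have hxp : x ∉ p.support := fun h => by simpa [hxT, hxq] using hsupp x h
      refine ⟨.cons (hST hx ht) (.cons (hST hzS ht).symm p),
        (hp.cons htp).cons (by simp [(hST hx ht).ne, hxp]), ?_, ?_⟩
      · rw [Walk.length_cons, Walk.length_cons]
        omega
      · intro v hv
        rw [Walk.support_cons, Walk.support_cons, List.mem_cons, List.mem_cons] at hv
        rcases hv with rfl | rfl | hv
        · exact .inl hx
        · exact .inr (.inl ht)
        · exact (hsupp v hv).imp Finset.mem_of_mem_erase (.imp_left Finset.mem_of_mem_erase)

namespace HkP3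

variable {k : ℕ}

/-- The set `A = {a_1, a_2, a_3}` of `H_k(P_3)` as a finset of vertices. -/
def partA (k : ℕ) : Finset (Fin (2 * k + 1)) := {0, 1, 2}

/-- The part `B` of `H_k(P_3)` as a finset of vertices. -/
def partB (k : ℕ) : Finset (Fin (2 * k + 1)) :=
  (Finset.Icc 3 (k + 1)).attachFin fun i hi => by rw [Finset.mem_Icc] at hi; omega

/-- The set `C` of `H_k(P_3)` as a finset of vertices. -/
def partC (k : ℕ) : Finset (Fin (2 * k + 1)) :=
  (Finset.Icc (k + 2) (2 * k)).attachFin fun i hi => by rw [Finset.mem_Icc] at hi; omega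

theorem mem_partB {v : Fin (2 * k + 1)} : v ∈ partB k ↔ inB_HkP3 k v := by
  rw [partB, Finset.mem_attachFin, Finset.mem_Icc, inB_HkP3]

theorem mem_partC {v : Fin (2 * k + 1)} : v ∈ partC k ↔ inC_HkP3 k v := by
  rw [partC, Finset.mem_attachFin, Finset.mem_Icc, inC_HkP3]

theorem card_partB (k : ℕ) : (partB k).card = k - 1 := by
  rw [partB, Finset.card_attachFin, Nat.card_Icc]
  omega

theorem card_partC (k : ℕ) : (partC k).card = k - 1 := by
  rw [partC, Finset.card_attachFin, Nat.card_Icc]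
  omega

theorem val_lt_three_of_mem_partA {v : Fin (2 * k + 1)} (hv : v ∈ partA k) : (v : ℕ) < 3 := by
  simp only [partA, Finset.mem_insert, Finset.mem_singleton] at hv
  rcases hv with rfl | rfl | rfl <;> exact Nat.lt_succ_of_le ((Nat.mod_le _ _).trans (by decide))

theorem disjoint_partA_partB (k : ℕ) : Disjoint (partA k) (partB k) := by
  refine Finset.disjoint_left.2 fun v hA hB => ?_
  have := val_lt_three_of_mem_partA hA
  rw [mem_partB, inB_HkP3] at hB
  omega

theorem disjoint_partA_partC (k : ℕ) : Disjoint (partA k) (partC k) := by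
  refine Finset.disjoint_left.2 fun v hA hC => ?_
  have := val_lt_three_of_mem_partA hA
  rw [mem_partC, inC_HkP3] at hC
  omega

theorem disjoint_partB_partC (k : ℕ) : Disjoint (partB k) (partC k) := by
  refine Finset.disjoint_left.2 fun v hB hC => ?_
  rw [mem_partB, inB_HkP3] at hB
  rw [mem_partC, inC_HkP3] at hC
  omega

theorem val_one (hk : 1 ≤ k) : ((1 : Fin (2 * k + 1)) : ℕ) = 1 :=
  Nat.mod_eq_of_lt (show 1 < 2 * k + 1 by omega)

theorem val_two (hk : 1 ≤ k) : ((2 : Fin (2 * k + 1)) : ℕ) = 2 :=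
  Nat.mod_eq_of_lt (show 2 < 2 * k + 1 by omega)

theorem zero_ne_two (hk : 1 ≤ k) : (0 : Fin (2 * k + 1)) ≠ 2 := by
  rw [ne_eq, Fin.ext_iff, val_two hk]
  exact Nat.zero_ne_add_one 1

theorem adj_of_mem_partB {u v : Fin (2 * k + 1)} (hu : u ∈ partB k) (hv : v ∉ partB k) :
    (HkP3 k).Adj u v :=
  ⟨ne_of_mem_of_not_mem hu hv, .inl (.inr (.inr ⟨mem_partB.1 hu, mt mem_partB.2 hv⟩))⟩

theorem adj_zero_one (hk : 1 ≤ k) : (HkP3 k).Adj 0 1 :=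
  ⟨by rw [ne_eq, Fin.ext_iff, val_one hk]; exact Nat.zero_ne_one, .inl (.inl ⟨rfl, val_one hk⟩)⟩

theorem adj_one_two (hk : 1 ≤ k) : (HkP3 k).Adj 1 2 :=
  ⟨by rw [ne_eq, Fin.ext_iff, val_one hk, val_two hk]; decide,
    .inl (.inr (.inl ⟨val_one hk, val_two hk⟩))⟩

theorem one_le_of_mem_partB {v : Fin (2 * k + 1)} (hv : v ∈ partB k) : 1 ≤ k := by
  rw [mem_partB, inB_HkP3] at hv
  omega

theorem isCompleteBetween_partB_partC (k : ℕ) :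
    (HkP3 k).IsCompleteBetween (partB k) (partC k) :=
  fun _ hb _ hc => adj_of_mem_partB hb (Finset.disjoint_right.1 (disjoint_partB_partC k) hc)

theorem exists_isPath_of_le {G : SimpleGraph (Fin (2 * k + 1))} (hG : HkP3 k ≤ G)
    {S : Finset (Fin (2 * k + 1))} (hS : S ⊆ partB k) {x a y : Fin (2 * k + 1)} (hx : x ∈ S)
    (ha : a ∈ partA k) {q : G.Walk a y} (hq : q.IsPath)
    (hqS : ∀ v ∈ q.support, v ∈ partA k ∨ v ∈ partB k \ S) :
    ∃ p : G.Walk x y, p.IsPath ∧ p.support.length = 2 * S.card + q.length := by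
  have hcard : S.card ≤ (partC k).card + 1 := by
    rw [card_partC, ← card_partB]
    exact (Finset.card_le_card hS).trans (Nat.le_succ _)
  have hSa : ∀ s ∈ S, G.Adj s a := fun s hs =>
    hG (adj_of_mem_partB (hS hs) (Finset.disjoint_left.1 (disjoint_partA_partB k) ha))
  have hq_disj : ∀ v ∈ q.support, v ∉ S ∧ v ∉ partC k := by
    intro v hv
    rcases hqS v hv with hA | hB
    · exact ⟨fun h => Finset.disjoint_left.1 (disjoint_partA_partB k) hA (hS h),
        Finset.disjoint_left.1 (disjoint_partA_partC k) hA⟩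
    · obtain ⟨hvB, hvS⟩ := Finset.mem_sdiff.1 hB
      exact ⟨hvS, Finset.disjoint_left.1 (disjoint_partB_partC k) hvB⟩
  obtain ⟨p, hp, hlen, -⟩ := exists_isPath_zigzag
    (fun s hs c hc => hG (isCompleteBetween_partB_partC k (hS hs) hc)) hcard hx hSa hq hq_disj
  exact ⟨p, hp, p.length_support.trans hlen⟩

theorem exists_isPath_of_mem_partB {x y : Fin (2 * k + 1)} (hx : x ∈ partB k) (hy : y ∈ partB k)
    (hxy : x ≠ y) : ∃ p : (HkP3 k).Walk x y, p.IsPath ∧ p.support.length = 2 * k - 1 := by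
  have hk : 1 ≤ k := one_le_of_mem_partB hx
  obtain ⟨hy₀, hy₁, hy₂⟩ : y ≠ 0 ∧ y ≠ 1 ∧ y ≠ 2 := by
    simpa [partA] using Finset.disjoint_right.1 (disjoint_partA_partB k) hy
  have h₂ : (2 : Fin (2 * k + 1)) ∉ partB k :=
    Finset.disjoint_left.1 (disjoint_partA_partB k) (by simp [partA])
  let q : (HkP3 k).Walk 0 y :=
    .cons (adj_zero_one hk) (.cons (adj_one_two hk) (.cons (adj_of_mem_partB hy h₂).symm .nil))
  have hq : q.IsPath := by
    simp [q, Walk.cons_isPath_iff, hy₀.symm, hy₁.symm, hy₂.symm, (adj_zero_one hk).ne,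
      zero_ne_two hk, (adj_one_two hk).ne]
  have hqS : ∀ v ∈ q.support, v ∈ partA k ∨ v ∈ partB k \ (partB k).erase y := by
    simp [q, partA, hy]
  obtain ⟨p, hp, hlen⟩ := exists_isPath_of_le le_rfl (Finset.erase_subset y (partB k))
    (Finset.mem_erase.2 ⟨hxy, hx⟩) (by simp [partA]) hq hqS
  have hcard : ((partB k).erase y).card + 1 = k - 1 := by
    rw [Finset.card_erase_add_one hy, card_partB]
  have hqlen : q.length = 3 := rfl
  exact ⟨p, hp, by omega⟩

theorem exists_isPath_of_support_subset_partA {G : SimpleGraph (Fin (2 * k + 1))}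
    (hG : HkP3 k ≤ G) {b a y : Fin (2 * k + 1)} (hb : b ∈ partB k) {q : G.Walk a y} (hq : q.IsPath)
    (hqA : ∀ v ∈ q.support, v ∈ partA k) :
    ∃ p : G.Walk b y, p.IsPath ∧ p.support.length = 2 * (k - 1) + q.length := by
  rw [← card_partB]
  exact exists_isPath_of_le hG subset_rfl hb (hqA a q.start_mem_support) hq
    fun v hv => .inl (hqA v hv)

theorem exists_isPath_to_one {b : Fin (2 * k + 1)} (hb : b ∈ partB k) :
    ∃ p : (HkP3 k).Walk b 1, p.IsPath ∧ p.support.length = 2 * k - 1 := by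
  have hk : 1 ≤ k := one_le_of_mem_partB hb
  let q : (HkP3 k).Walk 0 1 := (adj_zero_one hk).toWalk
  obtain ⟨p, hp, hlen⟩ := exists_isPath_of_support_subset_partA le_rfl hb (q := q)
    (.of_adj (adj_zero_one hk)) (by simp [q, partA])
  have hqlen : q.length = 1 := rfl
  exact ⟨p, hp, by omega⟩

theorem addEdge_exists_isPath_to_one {b : Fin (2 * k + 1)} (hb : b ∈ partB k) :
    ∃ p : (addEdge (HkP3 k) 0 2).Walk b 1, p.IsPath ∧ p.support.length = 2 * k := by
  have hk : 1 ≤ k := one_le_of_mem_partB hb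
  have hG : HkP3 k ≤ addEdge (HkP3 k) 0 2 := le_sup_left
  have h₀₂ : (addEdge (HkP3 k) 0 2).Adj 0 2 :=
    .inr ((fromEdgeSet_adj _).2 ⟨rfl, zero_ne_two hk⟩)
  let q : (addEdge (HkP3 k) 0 2).Walk 0 1 := .cons h₀₂ (hG (adj_one_two hk).symm).toWalk
  have hq : q.IsPath := by
    simp [q, Walk.cons_isPath_iff, zero_ne_two hk, (adj_zero_one hk).ne, (adj_one_two hk).ne']
  obtain ⟨p, hp, hlen⟩ := exists_isPath_of_support_subset_partA hG hb hq (by simp [q, partA])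
  have hqlen : q.length = 2 := rfl
  exact ⟨p, hp, by omega⟩

end HkP3

theorem HkP3_paths_B_a2_general (k : ℕ) :
    (∀ x y : Fin (2 * k + 1), x ≠ y →
      (inB_HkP3 k (x : ℕ) ∨ (x : ℕ) = 1) → (inB_HkP3 k (y : ℕ) ∨ (y : ℕ) = 1) →
      ∃ p : (HkP3 k).Walk x y, p.IsPath ∧ p.support.length = 2 * k - 1) ∧
    (∀ b : Fin (2 * k + 1), inB_HkP3 k (b : ℕ) →
      ∃ p : (addEdge (HkP3 k) (0 : Fin (2 * k + 1)) (2 : Fin (2 * k + 1))).Walk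
          b (1 : Fin (2 * k + 1)),
        p.IsPath ∧ p.support.length = 2 * k) := by
  simp only [← HkP3.mem_partB]
  refine ⟨fun x y hxy hx hy => ?_, fun b hb => HkP3.addEdge_exists_isPath_to_one hb⟩
  have eq_one {b v : Fin (2 * k + 1)} (hb : b ∈ HkP3.partB k) (hv : (v : ℕ) = 1) : v = 1 :=
    Fin.ext (hv.trans (HkP3.val_one (HkP3.one_le_of_mem_partB hb)).symm)
  rcases hx with hx | hx <;> rcases hy with hy | hy
  · exact HkP3.exists_isPath_of_mem_partB hx hy hxy
  · obtain rfl := eq_one hx hy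
    exact HkP3.exists_isPath_to_one hx
  · obtain rfl := eq_one hy hx
    obtain ⟨p, hp, hlen⟩ := HkP3.exists_isPath_to_one hy
    exact ⟨p.reverse, hp.reverse, by rwa [Walk.support_reverse, List.length_reverse]⟩
  · exact absurd (Fin.ext (hx.trans hy.symm)) hxy

/-- Let `k ≥ 5`. For any two distinct vertices `x, y ∈ B ∪ {a_2}` of
`H_k(P_3)` (here `a_1 = 0`, `a_2 = 1`, `a_3 = 2`) there is a path on `2k-1` vertices
from `x` to `y`. Moreover in `H_k(P_3) + a_1a_3`, for every `b ∈ B` there is a path on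
`2k` vertices from `b` to `a_2`. -/
theorem HkP3_paths_B_a2 (k : ℕ) (hk : 5 ≤ k) :
    (∀ x y : Fin (2 * k + 1), x ≠ y →
      (inB_HkP3 k (x : ℕ) ∨ (x : ℕ) = 1) → (inB_HkP3 k (y : ℕ) ∨ (y : ℕ) = 1) →
      ∃ p : (HkP3 k).Walk x y, p.IsPath ∧ p.support.length = 2 * k - 1) ∧
    (∀ b : Fin (2 * k + 1), inB_HkP3 k (b : ℕ) →
      ∃ p : (addEdge (HkP3 k) (0 : Fin (2 * k + 1)) (2 : Fin (2 * k + 1))).Walk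
          b (1 : Fin (2 * k + 1)),
        p.IsPath ∧ p.support.length = 2 * k) :=
  HkP3_paths_B_a2_general k
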